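/- arXiv:2102.08569 — 4 statements merged into one kernel-verified Lean document; each statement's English description precedes it below -/
import Mathlib

section
/- For all vertices i and j of G, the distance from i to j satisfies ‖ij‖ = deg*_x( adj(SA(G))_{i,j} ). In particular, adj(SA(G))_{i,j} = 0 if and only if j is unreachable from i. -/
/-- The length of a walk `p` (a list of vertices) in the weighted digraph with
weight function `W`, i.e. the sum of the weights of consecutive pairs. -/
def walkLen {V : Type*} (W : V → V → ℕ∞) (p : List V) : ℕ∞ :=
  ((p.zip p.tail).map fun q => W q.1 q.2).sum

/-- `p` is a walk from `u` to `v`: it is nonempty, starts at `u`, ends at `v`,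
and every consecutive pair is an edge (finite weight). -/
def IsWalk {V : Type*} (W : V → V → ℕ∞) (u v : V) (p : List V) : Prop :=
  p.head? = some u ∧ p.getLast? = some v ∧ p.Chain' fun x y => W x y ≠ ⊤

/-- The distance from `u` to `v`: the infimum of lengths of walks from `u` to `v`
(`⊤` if there is no walk). -/
noncomputable def gdist {V : Type*} (W : V → V → ℕ∞) (u v : V) : ℕ∞ :=
  sInf {d | ∃ p, IsWalk W u v p ∧ walkLen W p = d}

/-- `p` is a shortest path from `u` to `v`: a walk from `u` to `v` whose length
equals the distance. -/
def IsShortestPath {V : Type*} (W : V → V → ℕ∞) (u v : V) (p : List V) : Prop :=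
  IsWalk W u v p ∧ walkLen W p = gdist W u v

/-- The symbolic adjacency matrix of the digraph on `Fin n` with weight function `W`
(`W i j = ⊤` meaning no edge), over the polynomial ring `𝔽[x][z_{i,j}]`,
realized as polynomials in `x` with coefficients in the multivariate polynomial
ring in the variables `z_{i,j}` (indexed by pairs `(i, j)`). -/
noncomputable def symbAdj {F : Type*} [Field F] {n : ℕ} (W : Fin n → Fin n → ℕ∞) :
    Matrix (Fin n) (Fin n) (Polynomial (MvPolynomial (Fin n × Fin n) F)) :=
  fun i j =>
    if i = j then 1
    else if W i j ≠ ⊤ then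
      Polynomial.C (MvPolynomial.X (i, j)) * Polynomial.X ^ (W i j).toNat
    else 0

theorem aux_gdist_self {V : Type*} (W : V → V → ℕ∞) (j : V) : gdist W j j = 0 := by
  apply le_antisymm _ zero_le
  apply sInf_le
  exact ⟨[j], ⟨rfl, rfl, by simp [List.Chain']⟩, by simp [walkLen]⟩

theorem aux_gdist_le {V : Type*} (W : V → V → ℕ∞) (i k j : V) (h : W i k ≠ ⊤) :
    gdist W i j ≤ W i k + gdist W k j := by
  by_cases ht : gdist W k j = ⊤
  · simp [ht]
  · have hne : {d | ∃ p, IsWalk W k j p ∧ walkLen W p = d}.Nonempty := by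
      by_contra hc
      rw [Set.not_nonempty_iff_eq_empty] at hc
      exact ht (by rw [gdist, hc, sInf_empty])
    obtain ⟨p, hp, hl⟩ := csInf_mem hne
    apply sInf_le
    obtain ⟨h1, h2, h3⟩ := hp
    cases p with
    | nil => simp at h1
    | cons a t =>
      simp at h1
      subst h1
      refine ⟨i :: a :: t, ⟨rfl, ?_, ?_⟩, ?_⟩
      · simpa using h2
      · exact List.isChain_cons_cons.2 ⟨h, h3⟩
      · rw [gdist, ← hl]; simp [walkLen]

theorem aux_gdist_step {V : Type*} (W : V → V → ℕ∞) (i j : V) (hij : i ≠ j)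
    (ht : gdist W i j ≠ ⊤) :
    ∃ k, W i k ≠ ⊤ ∧ W i k + gdist W k j = gdist W i j := by
  have hne : {d | ∃ p, IsWalk W i j p ∧ walkLen W p = d}.Nonempty := by
    by_contra hc
    rw [Set.not_nonempty_iff_eq_empty] at hc
    exact ht (by rw [gdist, hc, sInf_empty])
  obtain ⟨p, ⟨h1, h2, h3⟩, hl⟩ := csInf_mem hne
  match p, h1, h2, h3, hl with
  | [], h1, _, _, _ => simp at h1
  | [a], h1, h2, _, _ => simp at h1 h2; exact absurd (h1.symm.trans h2) hij
  | a :: k :: t, h1, h2, h3, hl =>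
    simp at h1
    subst h1
    obtain ⟨h4, h5⟩ := List.isChain_cons_cons.1 h3
    refine ⟨k, h4, le_antisymm ?_ (aux_gdist_le W a k j h4)⟩
    have : gdist W k j ≤ walkLen W (k :: t) := by
      apply sInf_le
      exact ⟨_, ⟨rfl, by simpa using h2, h5⟩, rfl⟩
    rw [gdist.eq_1 W a, ← hl]
    refine (add_le_add_right this (W a k)).trans (le_of_eq ?_)
    simp [walkLen]

theorem aux_row {F : Type*} [Field F] {n : ℕ}
    (W : Fin n → Fin n → ℕ∞) (i j : Fin n) (d : ℕ) :
    ((symbAdj (F := F) W).adjugate i j).coeff d =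
      (if i = j then (symbAdj (F := F) W).det.coeff d else 0) -
      ∑ k ∈ Finset.univ.erase i, if W i k ≠ ⊤ then MvPolynomial.X (i, k) *
        (if (W i k).toNat ≤ d then
          ((symbAdj (F := F) W).adjugate k j).coeff (d - (W i k).toNat) else 0) else 0 := by
  have h := congrFun (congrFun (Matrix.mul_adjugate (symbAdj (F := F) W)) i) j
  rw [Matrix.mul_apply, ← Finset.add_sum_erase _ _ (Finset.mem_univ i)] at h
  have h' := congrArg (fun p => Polynomial.coeff p d) h
  simp only [Polynomial.coeff_add, Polynomial.finsetSum_coeff] at h'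
  rw [eq_sub_iff_add_eq]
  convert h' using 2
  · simp [symbAdj]
  · apply Finset.sum_congr rfl
    intro k hk
    have hk' : i ≠ k := (Finset.ne_of_mem_erase hk).symm
    by_cases hw : W i k = ⊤
    · simp [symbAdj, hk', hw]
    · simp only [symbAdj, hk', hw, if_false, ne_eq, not_false_eq_true, if_true]
      rw [mul_assoc, Polynomial.coeff_C_mul, Polynomial.coeff_X_pow_mul']
  · by_cases hij : i = j <;> simp [hij]

theorem aux_det {F : Type*} [Field F] {n : ℕ}
    (W : Fin n → Fin n → ℕ∞) (hpos : ∀ i j, W i j ≠ 0) :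
    (symbAdj (F := F) W).det.coeff 0 = 1 := by
  have h : (Polynomial.constantCoeff).mapMatrix (symbAdj (F := F) W) = 1 := by
    ext1 a b
    by_cases hab : a = b
    · subst hab
      simp [symbAdj]
    · by_cases hw : W a b = ⊤
      · simp [symbAdj, hab, hw]
      · have h0 : (W a b).toNat ≠ 0 := by simp [ENat.toNat_eq_zero, hpos, hw]
        simp [symbAdj, hab, hw, h0.symm]
  have h2 := RingHom.map_det (Polynomial.constantCoeff) (symbAdj (F := F) W)
  rw [h, Matrix.det_one] at h2
  simpa using h2

theorem aux_low {F : Type*} [Field F] {n : ℕ}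
    (W : Fin n → Fin n → ℕ∞) (hpos : ∀ i j, W i j ≠ 0) (j : Fin n) (d : ℕ) :
    ∀ i, (d : ℕ∞) < gdist W i j → ((symbAdj (F := F) W).adjugate i j).coeff d = 0 := by
  induction d using Nat.strong_induction_on with
  | _ d ih =>
    intro i hd
    have hij : i ≠ j := by
      rintro rfl
      simp [aux_gdist_self] at hd
    rw [aux_row, if_neg hij, zero_sub, neg_eq_zero]
    apply Finset.sum_eq_zero
    intro k _
    split_ifs with hw hle
    · rw [ih (d - (W i k).toNat), mul_zero]
      · have := hpos i k
        have : (W i k).toNat ≠ 0 := by simp [ENat.toNat_eq_zero, this, hw]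
        omega
      · have h2 := hd.trans_le (aux_gdist_le W i k j hw)
        by_contra hc
        rw [not_lt] at hc
        refine absurd h2 (not_lt.2 ((add_le_add_right hc _).trans ?_))
        conv_lhs => rw [← ENat.natCast_toNat hw]
        norm_cast
        simp only [ENat.toNat_natCast]
        omega
    · simp
    · rfl

theorem aux_high {F : Type*} [Field F] {n : ℕ}
    (W : Fin n → Fin n → ℕ∞) (hpos : ∀ i j, W i j ≠ 0) (j : Fin n) :
    ∃ φ : MvPolynomial (Fin n × Fin n) F →+* F, ∀ (d : ℕ) (i : Fin n), gdist W i j = d →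
      φ (((symbAdj (F := F) W).adjugate i j).coeff d) = 1 := by
  classical
  have hex : ∀ i, ∃ k, i ≠ j → gdist W i j ≠ ⊤ →
      W i k ≠ ⊤ ∧ W i k + gdist W k j = gdist W i j := by
    intro i
    by_cases h : i ≠ j ∧ gdist W i j ≠ ⊤
    · obtain ⟨k, hk⟩ := aux_gdist_step W i j h.1 h.2
      exact ⟨k, fun _ _ => hk⟩
    · exact ⟨i, fun h1 h2 => absurd ⟨h1, h2⟩ h⟩
  choose par hpar using hex
  refine ⟨MvPolynomial.eval (fun q => if q.2 = par q.1 then -1 else 0), ?_⟩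
  intro d
  induction d using Nat.strong_induction_on with
  | _ d ih =>
    intro i hd
    have hw0 : ∀ k, W i k ≠ ⊤ → (W i k).toNat ≠ 0 := fun k hw => by
      simp [ENat.toNat_eq_zero, hpos, hw]
    by_cases hij : i = j
    · subst hij
      rw [aux_gdist_self] at hd
      obtain rfl : d = 0 := by exact_mod_cast hd.symm
      rw [aux_row, if_pos rfl, aux_det W hpos, Finset.sum_eq_zero]
      · simp
      · intro k _
        split_ifs with hw hle
        · exact absurd (Nat.le_zero.1 hle) (hw0 k hw)
        · simp
        · rfl
    · obtain ⟨hw, hs⟩ := hpar i hij (by simp [hd])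
      have hk : gdist W (par i) j ≠ ⊤ := by
        intro h; simp [h, hd] at hs
      obtain ⟨e, he⟩ := ENat.ne_top_iff_exists.1 hk
      obtain ⟨w, hw'⟩ := ENat.ne_top_iff_exists.1 hw
      have hw1 := hw0 _ hw
      rw [← hw', ENat.toNat_natCast] at hw1
      rw [← he, ← hw', hd] at hs
      have hs' : w + e = d := by exact_mod_cast hs
      have hpi : par i ≠ i := by
        intro h
        rw [h, hd] at he
        have : e = d := by exact_mod_cast he
        omega
      rw [aux_row, if_neg hij, zero_sub, map_neg, map_sum,
        Finset.sum_eq_single_of_mem (par i) (by simp [hpi])]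
      · rw [if_pos hw, ← hw', ENat.toNat_natCast, if_pos (by omega), map_mul,
          show d - w = e by omega, ih e (by omega) _ he.symm]
        simp
      · intro k _ hk
        split_ifs <;> simp [hk]

theorem dist_eq_trailingDegree_adjugate_symbAdj {F : Type*} [Field F] {n : ℕ}
    (W : Fin n → Fin n → ℕ∞) (hpos : ∀ i j, W i j ≠ 0) (hloop : ∀ i, W i i = ⊤)
    (i j : Fin n) :
    gdist W i j = ((symbAdj (F := F) W).adjugate i j).trailingDegree ∧
      ((symbAdj (F := F) W).adjugate i j = 0 ↔ gdist W i j = ⊤) := by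
  have key : gdist W i j = ((symbAdj (F := F) W).adjugate i j).trailingDegree := by
    apply le_antisymm
    · by_contra hc
      rw [not_le] at hc
      have hne := Polynomial.ne_zero_of_trailingDegree_lt hc
      rw [Polynomial.trailingDegree_eq_natTrailingDegree hne] at hc
      exact hne (Polynomial.trailingCoeff_eq_zero.1 (aux_low W hpos j _ i hc))
    · by_cases ht : gdist W i j = ⊤
      · simp [ht]
      · obtain ⟨d, hd⟩ := ENat.ne_top_iff_exists.1 ht
        obtain ⟨φ, hφ⟩ := aux_high (F := F) W hpos j
        rw [← hd]
        apply Polynomial.trailingDegree_le_of_ne_zero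
        intro h
        have := hφ d i hd.symm
        rw [h, map_zero] at this
        exact zero_ne_one this
  exact ⟨key, by rw [key, Polynomial.trailingDegree_eq_top]⟩
end

section
/- There is a constant C₀ such that the following holds for every C ≥ C₀, every integer n ≥ 2, every integer M ≥ 1, and every weighted digraph G on a vertex set V of size n with all edge weights in {1,2,…,M}. Let π : V → {1,…,n} be a uniformly random bijection. Then with probability at least 1 − n^{2 − C/1.1}, for every pair of vertices u, v such that ‖uv‖ < ∞ and some shortest path from u to v has at least one internal vertex, there exist a shortest path P from u to v and an internal vertex z of P with π(z) ≤ C·M·n·ln(n)/‖uv‖. -/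
theorem walkLen_cons_cons {V : Type*} (W : V → V → ℕ∞) (x y : V) (l : List V) :
    walkLen W (x :: y :: l) = W x y + walkLen W (y :: l) := by
  simp [walkLen]

theorem isWalk_cons {V : Type*} (W : V → V → ℕ∞) (u v x y : V) (l : List V) :
    IsWalk W u v (x :: y :: l) ↔ x = u ∧ W x y ≠ ⊤ ∧ IsWalk W y v (y :: l) := by
  unfold IsWalk List.Chain'
  simp only [List.head?_cons, Option.some.injEq, List.getLast?_cons_cons, List.isChain_cons_cons]
  tauto

theorem walkLen_le {V : Type*} (W : V → V → ℕ∞) (M : ℕ)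
    (hW : ∀ x y, W x y = ⊤ ∨ (1 ≤ W x y ∧ W x y ≤ (M : ℕ∞))) (v : V) :
    ∀ (l : List V) (u x : V), IsWalk W u v (x :: l) →
      walkLen W (x :: l) ≤ ((l.length * M : ℕ) : ℕ∞) := by
  intro l
  induction l with
  | nil => intro u x _; simp [walkLen]
  | cons y l ih =>
    intro u x h
    rw [isWalk_cons] at h
    rw [walkLen_cons_cons]
    have h1 := ih y y h.2.2
    have h2 := ((hW x y).resolve_left h.2.1).2
    calc W x y + walkLen W (y :: l) ≤ (M : ℕ∞) + ((l.length * M : ℕ) : ℕ∞) := add_le_add h2 h1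
      _ = _ := by push_cast [List.length_cons]; ring

theorem walk_suffix {V : Type*} (W : V → V → ℕ∞) (v z : V) :
    ∀ (l : List V) (u x : V), IsWalk W u v (x :: l) → z ∈ x :: l →
      ∃ q, IsWalk W z v q ∧ walkLen W q ≤ walkLen W (x :: l) := by
  intro l
  induction l with
  | nil =>
    intro u x h hz
    simp only [List.mem_singleton] at hz
    subst hz
    refine ⟨[z], ⟨by simp, h.2.1, h.2.2⟩, le_rfl⟩
  | cons y l ih =>
    intro u x h hz
    by_cases hzx : z = x
    · subst hzx
      exact ⟨_, ⟨by simp, h.2.1, h.2.2⟩, le_rfl⟩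
    · rw [isWalk_cons] at h
      obtain ⟨q, hq, hle⟩ := ih y y h.2.2 (by simpa [hzx] using hz)
      refine ⟨q, hq, hle.trans ?_⟩
      rw [walkLen_cons_cons]
      exact le_add_self

theorem walk_nodup {V : Type*} (W : V → V → ℕ∞) (M : ℕ)
    (hW : ∀ x y, W x y = ⊤ ∨ (1 ≤ W x y ∧ W x y ≤ (M : ℕ∞))) (v : V) :
    ∀ (l : List V) (u x : V), IsWalk W u v (x :: l) →
      (∀ q, IsWalk W u v q → walkLen W (x :: l) ≤ walkLen W q) → (x :: l).Nodup := by
  intro l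
  induction l with
  | nil => intro u x _ _; simp
  | cons y l ih =>
    intro u x h hmin
    have hw := h
    rw [isWalk_cons] at h
    obtain ⟨rfl, hxy, hwy⟩ := h
    rw [List.nodup_cons]
    have hfin : walkLen W (y :: l) ≠ ⊤ :=
      ne_top_of_le_ne_top (ENat.natCast_ne_top _) (walkLen_le W M hW v l y y hwy)
    rw [walkLen_cons_cons] at hmin
    constructor
    · intro hx
      obtain ⟨q, hq, hle⟩ := walk_suffix W v x l y y hwy hx
      have h1 := (hmin q hq).trans hle
      have h2 := ((hW x y).resolve_left hxy).1
      have h3 : 1 + walkLen W (y :: l) ≤ walkLen W (y :: l) := le_trans (by gcongr) h1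
      lift walkLen W (y :: l) to ℕ using hfin with k
      norm_cast at h3
      omega
    · refine ih y y hwy ?_
      intro q hq
      cases q with
      | nil => simp [IsWalk] at hq
      | cons a q =>
        have ha : a = y := by simpa using hq.1
        subst ha
        have := hmin (x :: a :: q) ((isWalk_cons _ _ _ _ _ _).2 ⟨rfl, hxy, hq⟩)
        rw [walkLen_cons_cons] at this
        exact (ENat.add_le_add_iff_left hxy).1 this

theorem path_data {V : Type*} [DecidableEq V] (W : V → V → ℕ∞) (M : ℕ)
    (hW : ∀ x y, W x y = ⊤ ∨ (1 ≤ W x y ∧ W x y ≤ (M : ℕ∞))) (u v : V) (p : List V)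
    (hp : IsShortestPath W u v p) (hne : p.tail.dropLast ≠ []) :
    1 ≤ (gdist W u v).toNat ∧ 1 ≤ (p.tail.dropLast.toFinset).card ∧
      (gdist W u v).toNat ≤ ((p.tail.dropLast.toFinset).card + 1) * M := by
  obtain ⟨hw, hlen⟩ := hp
  match p, hw, hlen, hne with
  | [], _, _, hne => simp at hne
  | [a], _, _, hne => simp at hne
  | x :: y :: l, hw, hlen, hne =>
    have hmin : ∀ q, IsWalk W u v q → walkLen W (x :: y :: l) ≤ walkLen W q := by
      intro q hq
      rw [hlen]
      exact sInf_le ⟨q, hq, rfl⟩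
    have hnd := walk_nodup W M hW v _ _ _ hw hmin
    have hle := walkLen_le W M hW v _ _ _ hw
    have hnd2 : ((x :: y :: l).tail.dropLast).Nodup :=
      (hnd.sublist (List.tail_sublist _)).sublist (List.dropLast_sublist _)
    rw [List.toFinset_card_of_nodup hnd2]
    have h1 : 1 ≤ walkLen W (x :: y :: l) := by
      rw [walkLen_cons_cons]
      rw [isWalk_cons] at hw
      exact ((hW x y).resolve_left hw.2.1).1.trans le_self_add
    rw [← hlen]
    have hfin : walkLen W (x :: y :: l) ≠ ⊤ :=
      ne_top_of_le_ne_top (ENat.natCast_ne_top _) hle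
    have hpos := List.length_pos_iff.2 hne
    lift walkLen W (x :: y :: l) to ℕ using hfin with k
    refine ⟨by simpa using h1, hpos, ?_⟩
    simpa using (by exact_mod_cast hle : k ≤ (l.length + 1) * M)

theorem count_step {V : Type} [Fintype V] [DecidableEq V] (n : ℕ) (hV : Fintype.card V = n)
    (r : ℕ) (S : Finset V) (z : V) (hz : z ∉ S) :
    n * (Finset.univ.filter fun π : V ≃ Fin n => ∀ x ∈ insert z S, r ≤ (π x : ℕ)).card ≤
      (n - r) * (Finset.univ.filter fun π : V ≃ Fin n => ∀ x ∈ S, r ≤ (π x : ℕ)).card := by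
  set A := Finset.univ.filter fun π : V ≃ Fin n => ∀ x ∈ S, r ≤ (π x : ℕ) with hA
  set B : V → Finset (V ≃ Fin n) := fun w =>
    Finset.univ.filter fun π : V ≃ Fin n => ∀ x ∈ insert w S, r ≤ (π x : ℕ) with hB
  change n * (B z).card ≤ _
  have hsymm : ∀ w ∈ Sᶜ, (B w).card = (B z).card := by
    intro w hw
    rw [Finset.mem_compl] at hw
    refine Finset.card_bij' (fun π _ => (Equiv.swap w z).trans π)
      (fun π _ => (Equiv.swap w z).trans π) ?_ ?_ ?_ ?_
    · intro π hπ
      simp only [hB, Finset.mem_filter, Finset.mem_univ, true_and, Finset.mem_insert,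
        forall_eq_or_imp, Equiv.trans_apply, Equiv.swap_apply_right] at hπ ⊢
      refine ⟨hπ.1, fun x hx => ?_⟩
      rw [Equiv.swap_apply_of_ne_of_ne (by rintro rfl; exact hw hx) (by rintro rfl; exact hz hx)]
      exact hπ.2 x hx
    · intro π hπ
      simp only [hB, Finset.mem_filter, Finset.mem_univ, true_and, Finset.mem_insert,
        forall_eq_or_imp, Equiv.trans_apply, Equiv.swap_apply_left] at hπ ⊢
      refine ⟨hπ.1, fun x hx => ?_⟩
      rw [Equiv.swap_apply_of_ne_of_ne (by rintro rfl; exact hw hx) (by rintro rfl; exact hz hx)]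
      exact hπ.2 x hx
    · intro π _; ext x; simp
    · intro π _; ext x; simp
  have hdouble : ∑ w ∈ Sᶜ, (B w).card = ∑ π ∈ A, (Sᶜ.filter fun w => r ≤ (π w : ℕ)).card := by
    have h1 : ∀ w, B w = A.filter fun π => r ≤ (π w : ℕ) := by
      intro w; ext π; simp [hA, hB, and_comm]
    simp only [h1]
    exact Finset.sum_card_bipartiteAbove_eq_sum_card_bipartiteBelow
      (fun w (π : V ≃ Fin n) => r ≤ (π w : ℕ))
  have hcnt : ∀ π ∈ A, (Sᶜ.filter fun w => r ≤ (π w : ℕ)).card + S.card = n - r := by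
    intro π hπ
    simp only [hA, Finset.mem_filter, Finset.mem_univ, true_and] at hπ
    rw [← Finset.card_union_of_disjoint]
    · have : (Sᶜ.filter fun w => r ≤ (π w : ℕ)) ∪ S = Finset.univ.filter fun w => r ≤ (π w : ℕ) := by
        ext w
        by_cases hw : w ∈ S
        · simp [hw, hπ w hw]
        · simp [hw]
      rw [this]
      have h2 : (Finset.univ.filter fun w => r ≤ (π w : ℕ)).card
          = (Finset.univ.filter fun i : Fin n => r ≤ (i : ℕ)).card := by
        refine Finset.card_bij (fun w _ => π w) ?_ ?_ ?_
        · intro w hw; simpa using hw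
        · intro a _ b _ h; exact π.injective h
        · intro i hi; exact ⟨π.symm i, by simpa using hi, by simp⟩
      rw [h2]
      have h3 : (Finset.univ.filter fun i : Fin n => r ≤ (i : ℕ)).card = (Finset.Ico r n).card := by
        refine Finset.card_bij (fun w _ => (w : ℕ)) ?_ ?_ ?_
        · intro w hw; simpa using hw
        · intro a _ b _ h; exact Fin.ext h
        · intro i hi
          rw [Finset.mem_Ico] at hi
          exact ⟨⟨i, hi.2⟩, by simpa using hi.1, rfl⟩
      rw [h3, Nat.card_Ico]
    · rw [Finset.disjoint_left]
      intro w hw; simp at hw; exact hw.1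
  have hS : Sᶜ.card + S.card = n := by rw [Finset.card_compl_add_card, hV]
  have hSpos : 0 < Sᶜ.card := Finset.card_pos.2 ⟨z, by simpa using hz⟩
  rw [Finset.sum_congr rfl hsymm, Finset.sum_const, smul_eq_mul] at hdouble
  rcases A.eq_empty_or_nonempty with h0 | ⟨π0, hπ0⟩
  · rw [h0] at hdouble ⊢
    simp at hdouble ⊢
    rcases hdouble with h | h
    · simp [h] at hSpos
    · right; exact h
  · obtain ⟨m, hm⟩ : ∃ m, m + S.card = n - r := ⟨_, hcnt π0 hπ0⟩
    have : ∀ π ∈ A, (Sᶜ.filter fun w => r ≤ (π w : ℕ)).card = m := by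
      intro π hπ; have := hcnt π hπ; omega
    rw [Finset.sum_congr rfl this, Finset.sum_const, smul_eq_mul] at hdouble
    rw [← hm]
    have hmS : m ≤ Sᶜ.card := by omega
    generalize (B z).card = b at *
    generalize A.card = a at *
    generalize Sᶜ.card = c at *
    generalize S.card = s at *
    subst hS
    have : c * ((c + s) * b) ≤ c * ((m + s) * a) := by
      calc c * ((c + s) * b) = (c + s) * (c * b) := by ring
        _ = (c + s) * (a * m) := by rw [hdouble]
        _ = c * m * a + s * a * m := by ring
        _ ≤ c * m * a + s * a * c := by gcongr
        _ = _ := by ring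
    exact Nat.le_of_mul_le_mul_left this hSpos

theorem count_bound {V : Type} [Fintype V] [DecidableEq V] (n : ℕ) (hV : Fintype.card V = n)
    (r : ℕ) (S : Finset V) :
    n ^ S.card * (Finset.univ.filter fun π : V ≃ Fin n => ∀ x ∈ S, r ≤ (π x : ℕ)).card ≤
      (n - r) ^ S.card * Fintype.card (V ≃ Fin n) := by
  induction S using Finset.induction_on with
  | empty => simp
  | insert z S hz ih =>
    have h := count_step n hV r S z hz
    rw [Finset.card_insert_of_notMem hz, pow_succ, pow_succ]
    calc _ = n ^ S.card * (n * (Finset.univ.filter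
            fun π : V ≃ Fin n => ∀ x ∈ insert z S, r ≤ (π x : ℕ)).card) := by ring
      _ ≤ n ^ S.card * ((n - r) * (Finset.univ.filter
            fun π : V ≃ Fin n => ∀ x ∈ S, r ≤ (π x : ℕ)).card) := by gcongr
      _ = (n - r) * (n ^ S.card * (Finset.univ.filter
            fun π : V ≃ Fin n => ∀ x ∈ S, r ≤ (π x : ℕ)).card) := by ring
      _ ≤ (n - r) * ((n - r) ^ S.card * Fintype.card (V ≃ Fin n)) := by gcongr
      _ = _ := by ring

theorem bad_bound {V : Type} [Fintype V] [DecidableEq V] (n : ℕ) (hn : 2 ≤ n)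
    (hV : Fintype.card V = n) (S : Finset V) (hS : 1 ≤ S.card) (C : ℝ) (hC : 40 ≤ C)
    (M d : ℕ) (hd : 1 ≤ d) (hdM : d ≤ (S.card + 1) * M) (hM : 1 ≤ M) (A : Finset (V ≃ Fin n))
    (hA : ∀ π ∈ A, ∀ z ∈ S, C * M * n * Real.log n / (d : ℝ) < ((π z : ℕ) + 1 : ℝ)) :
    (A.card : ℝ) ≤ (n : ℝ) ^ (-(C / 1.1)) * Fintype.card (V ≃ Fin n) := by
  set R : ℝ := C * M * n * Real.log n / (d : ℝ) with hR
  have hn' : (2 : ℝ) ≤ n := by exact_mod_cast hn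
  have hL : (0.69 : ℝ) ≤ Real.log n := by
    have := Real.log_two_gt_d9
    have h2 := Real.log_le_log (by norm_num) hn'
    linarith
  set L := Real.log n
  have hd' : (1 : ℝ) ≤ d := by exact_mod_cast hd
  have hM' : (1 : ℝ) ≤ M := by exact_mod_cast hM
  have hR0 : 0 ≤ R := by positivity
  set s := S.card with hs
  have hdM' : (d : ℝ) ≤ (s + 1) * M := by exact_mod_cast hdM
  have hs' : (1 : ℝ) ≤ s := by exact_mod_cast hS
  have hsn : (s : ℝ) ≤ n := by
    rw [← hV]; exact_mod_cast Finset.card_le_univ S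
  have hRge : C * L * n / (s + 1) ≤ R := by
    rw [hR, div_le_div_iff₀ (by linarith) (by linarith)]
    have : 0 ≤ C * L * n := by positivity
    nlinarith
  set r := ⌊R⌋₊ with hr
  have hrA : ∀ π ∈ A, ∀ z ∈ S, r ≤ (π z : ℕ) := by
    intro π hπ z hz
    have h := hA π hπ z hz
    have : r < (π z : ℕ) + 1 := by
      rw [hr, Nat.floor_lt hR0]; exact_mod_cast h
    omega
  by_cases hrn : n ≤ r
  · have : A = ∅ := by
      rw [Finset.eq_empty_iff_forall_notMem]
      intro π hπ
      obtain ⟨z, hz⟩ := Finset.card_pos.1 hS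
      have := hrA π hπ z hz
      have := (π z).2
      omega
    rw [this]; simp; positivity
  · push Not at hrn
    have hRn : R < n := by
      by_contra! h
      exact absurd (Nat.le_floor h) (by omega)
    have hRr : R < r + 1 := Nat.lt_floor_add_one R
    have hcb := count_bound n hV r S
    have hAle : A.card ≤ (Finset.univ.filter fun π : V ≃ Fin n => ∀ x ∈ S, r ≤ (π x : ℕ)).card :=
      Finset.card_le_card fun π hπ => by simpa using hrA π hπ
    have h1 : n ^ s * A.card ≤ (n - r) ^ s * Fintype.card (V ≃ Fin n) :=
      le_trans (by gcongr) hcb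
    have h2 : (n : ℝ) ^ s * A.card ≤ ((n : ℝ) - r) ^ s * Fintype.card (V ≃ Fin n) := by
      have : ((n - r : ℕ) : ℝ) = (n : ℝ) - r := Nat.cast_sub hrn.le
      rw [← this]; exact_mod_cast h1
    have hrn' : (r : ℝ) < n := by exact_mod_cast hrn
    have h3 : (A.card : ℝ) ≤ (((n : ℝ) - r) / n) ^ s * Fintype.card (V ≃ Fin n) := by
      rw [div_pow, div_mul_eq_mul_div, le_div_iff₀ (by positivity)]
      linarith
    refine h3.trans ?_
    gcongr
    have h4 : ((n : ℝ) - r) / n ≤ Real.exp (-(r / n)) := by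
      have := Real.add_one_le_exp (-((r : ℝ) / n))
      have h5 : ((n : ℝ) - r) / n = -((r : ℝ) / n) + 1 := by field_simp; ring
      linarith
    have h0 : 0 ≤ ((n : ℝ) - r) / n := div_nonneg (by linarith) (by linarith)
    refine (pow_le_pow_left₀ h0 h4 s).trans ?_
    rw [← Real.exp_nat_mul, Real.rpow_def_of_pos (by linarith)]
    apply Real.exp_le_exp.2
    change (s : ℝ) * -(r / n) ≤ L * -(C / 1.1)
    have hCL : 27 ≤ C * L := by nlinarith
    have h6 : C * L / (s + 1) < 1 := by
      have h7 : C * L * n / (s + 1) < n := hRge.trans_lt hRn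
      rw [div_lt_iff₀ (by linarith)] at h7 ⊢
      nlinarith
    have h8 : C * L / (s + 1) - 1 / n ≤ r / n := by
      have : C * L / (s + 1) - 1 / n = (C * L * n / (s + 1) - 1) / n := by field_simp
      rw [this]
      gcongr
      linarith
    have h9 : (s : ℝ) * (C * L / (s + 1) - 1 / n) ≤ s * (r / n) := by gcongr
    have h10 : (s : ℝ) * (C * L / (s + 1) - 1 / n) = C * L - C * L / (s + 1) - s / n := by
      field_simp; ring
    have h11 : (s : ℝ) / n ≤ 1 := by rw [div_le_one (by linarith)]; exact hsn
    have h12 : L * (C / 1.1) ≤ C * L - 2 := by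
      have : L * (C / 1.1) = (C * L) * (10 / 11) := by ring
      rw [this]; linarith
    linarith

open scoped Classical in
theorem random_bijection_hits_shortest_paths :
    ∃ C₀ : ℝ, ∀ C : ℝ, C₀ ≤ C → ∀ n : ℕ, 2 ≤ n → ∀ M : ℕ, 1 ≤ M →
      ∀ (V : Type) [Fintype V] [DecidableEq V], Fintype.card V = n →
        ∀ W : V → V → ℕ∞, (∀ x y, W x y = ⊤ ∨ (1 ≤ W x y ∧ W x y ≤ (M : ℕ∞))) →
          ((1 : ℝ) - (n : ℝ) ^ ((2 : ℝ) - C / 1.1)) * Fintype.card (V ≃ Fin n) ≤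
            (Finset.univ.filter fun π : V ≃ Fin n =>
              ∀ u v : V, gdist W u v ≠ ⊤ →
                (∃ p, IsShortestPath W u v p ∧ p.tail.dropLast ≠ []) →
                ∃ p z, IsShortestPath W u v p ∧ z ∈ p.tail.dropLast ∧
                  ((π z : ℕ) + 1 : ℝ) ≤
                    C * M * n * Real.log n / ((gdist W u v).toNat : ℝ)).card := by
  refine ⟨40, ?_⟩
  intro C hC n hn M hM V _ _ hV W hW
  set good := (Finset.univ.filter fun π : V ≃ Fin n =>
              ∀ u v : V, gdist W u v ≠ ⊤ →
                (∃ p, IsShortestPath W u v p ∧ p.tail.dropLast ≠ []) →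
                ∃ p z, IsShortestPath W u v p ∧ z ∈ p.tail.dropLast ∧
                  ((π z : ℕ) + 1 : ℝ) ≤
                    C * M * n * Real.log n / ((gdist W u v).toNat : ℝ)) with hgood
  set bad : V × V → Finset (V ≃ Fin n) := fun q => Finset.univ.filter fun π : V ≃ Fin n =>
      (∃ p, IsShortestPath W q.1 q.2 p ∧ p.tail.dropLast ≠ []) ∧
      ∀ p z, IsShortestPath W q.1 q.2 p → z ∈ p.tail.dropLast →
        C * M * n * Real.log n / ((gdist W q.1 q.2).toNat : ℝ) < ((π z : ℕ) + 1 : ℝ) with hbad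
  have hsub : (Finset.univ : Finset (V ≃ Fin n)) ⊆
      good ∪ (Finset.univ : Finset (V × V)).biUnion bad := by
    intro π _
    rw [Finset.mem_union]
    by_contra! h
    apply h.1
    rw [hgood, Finset.mem_filter]
    refine ⟨Finset.mem_univ _, fun u v _ hp => ?_⟩
    by_contra! hcon
    apply h.2
    rw [Finset.mem_biUnion]
    refine ⟨(u, v), Finset.mem_univ _, ?_⟩
    rw [hbad, Finset.mem_filter]
    exact ⟨Finset.mem_univ _, hp, hcon⟩
  have hb : ∀ q, ((bad q).card : ℝ) ≤ (n : ℝ) ^ (-(C / 1.1)) * Fintype.card (V ≃ Fin n) := by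
    intro q
    by_cases hex : ∃ p, IsShortestPath W q.1 q.2 p ∧ p.tail.dropLast ≠ []
    · obtain ⟨p, hp, hne⟩ := hex
      obtain ⟨h1, h2, h3⟩ := path_data W M hW q.1 q.2 p hp hne
      refine bad_bound n hn hV _ h2 C hC M _ h1 h3 hM (bad q) ?_
      intro π hπ z hz
      rw [hbad, Finset.mem_filter] at hπ
      exact hπ.2.2 p z hp (List.mem_toFinset.1 hz)
    · have : bad q = ∅ := by
        rw [Finset.eq_empty_iff_forall_notMem]
        intro π hπ
        rw [hbad, Finset.mem_filter] at hπ
        exact hex hπ.2.1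
      rw [this, Finset.card_empty, Nat.cast_zero]
      positivity
  have hcard := (Finset.card_le_card hsub).trans (Finset.card_union_le _ _)
  have hcard2 : (Fintype.card (V ≃ Fin n) : ℝ) ≤ good.card + ∑ q, ((bad q).card : ℝ) := by
    have h := hcard.trans (Nat.add_le_add_left
      (Finset.card_biUnion_le (s := (Finset.univ : Finset (V × V))) (t := bad)) _)
    rw [Finset.card_univ] at h
    have h' : ((Fintype.card (V ≃ Fin n) : ℕ) : ℝ) ≤
      ((good.card + ∑ q, (bad q).card : ℕ) : ℝ) := Nat.cast_le.2 (by convert h)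
    push_cast at h'
    exact h'
  have hsum : ∑ q, ((bad q).card : ℝ) ≤
      (n : ℝ) ^ ((2 : ℝ) - C / 1.1) * Fintype.card (V ≃ Fin n) := by
    calc ∑ q, ((bad q).card : ℝ)
        ≤ ∑ _q : V × V, (n : ℝ) ^ (-(C / 1.1)) * Fintype.card (V ≃ Fin n) :=
          Finset.sum_le_sum fun q _ => hb q
      _ = _ := by
        have hn0 : (0 : ℝ) < n := by exact_mod_cast (by omega : 0 < n)
        rw [Finset.sum_const, Finset.card_univ, Fintype.card_prod, hV, sub_eq_add_neg,
          Real.rpow_add hn0, nsmul_eq_mul]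
        push_cast
        rw [Real.rpow_two]
        ring
  linarith
end

section
/- Let V be a finite vertex set. There exists a map Φ assigning to every weighted digraph G on V (with positive integer edge weights) and every ordered pair (u,v) with ‖uv‖_G < ∞ a shortest path ρ_G(u,v) from u to v in G, such that: (a) for every G, the family ρ_G is subpath-consistent, i.e. for any (u,v) and positions i ≤ j on ρ_G(u,v) = (x₀,…,x_k), the subwalk (x_i,…,x_j) equals ρ_G(x_i, x_j); and (b) whenever G′ is a subgraph of G (meaning the weight function of G′ agrees with that of G on every edge of G′ and equals ∞ elsewhere) and every edge of ρ_G(u,v) is an edge of G′, then ρ_{G′}(u,v) = ρ_G(u,v). -/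
theorem aux_chain_iff {V : Type*} (R : V → V → Prop) (p : List V) :
    p.IsChain R ↔ ∀ q ∈ p.zip p.tail, R q.1 q.2 := by
  induction p with
  | nil => simp
  | cons a t ih =>
    cases t with
    | nil => simp
    | cons b t => simp [List.isChain_cons_cons, ih]

theorem aux_walk_congr {V : Type*} {W W' : V → V → ℕ∞} {u v : V} {p : List V}
    (h : ∀ q ∈ p.zip p.tail, W' q.1 q.2 = W q.1 q.2) :
    (IsWalk W' u v p ↔ IsWalk W u v p) ∧ walkLen W' p = walkLen W p := by
  constructor
  · unfold IsWalk
    have : (p.IsChain fun x y => W' x y ≠ ⊤) ↔ (p.IsChain fun x y => W x y ≠ ⊤) := by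
      rw [aux_chain_iff, aux_chain_iff]
      exact forall₂_congr fun q hq => by rw [h q hq]
    exact and_congr_right fun _ => and_congr_right fun _ => this
  · unfold walkLen
    rw [List.map_congr_left h]

theorem aux_walkLen_append {V : Type*} (W : V → V → ℕ∞) (a b : List V) :
    walkLen W (a ++ b) = walkLen W a +
      (match a.getLast?, b.head? with | some x, some y => W x y | _, _ => 0) + walkLen W b := by
  induction a with
  | nil => simp [walkLen]
  | cons x t ih =>
    cases t with
    | nil => cases b <;> simp [walkLen]
    | cons y t =>
      have e : ∀ l, walkLen W (x :: y :: l) = W x y + walkLen W (y :: l) := by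
        intro l; simp [walkLen]
      rw [List.cons_append, List.cons_append, e, ← List.cons_append, ih, e,
        List.getLast?_cons_cons]
      simp only [add_assoc]

theorem aux_replace_len {V : Type*} (W : V → V → ℕ∞) (a b : List V) (x y : V) :
    ∃ c : ℕ∞, ∀ q : List V, q.head? = some x → q.getLast? = some y →
      walkLen W (a ++ (q ++ b)) = c + walkLen W q := by
  refine ⟨walkLen W a + (match a.getLast?, some x with | some x, some y => W x y | _, _ => 0) +
    ((match some y, b.head? with | some x, some y => W x y | _, _ => 0) + walkLen W b), ?_⟩
  intro q hx hy
  have hh : (q ++ b).head? = some x := by simp [List.head?_append, hx]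
  rw [aux_walkLen_append W a, aux_walkLen_append W q, hh, hy]
  ac_rfl

theorem aux_replace_walk {V : Type*} {W : V → V → ℕ∞} {a b q q' : List V} {x y u v : V}
    (hx : q.head? = some x) (hy : q.getLast? = some y)
    (hp : IsWalk W u v (a ++ (q ++ b))) (hq' : IsWalk W x y q') :
    IsWalk W u v (a ++ (q' ++ b)) := by
  obtain ⟨h1, h2, h3⟩ := hp
  obtain ⟨g1, g2, g3⟩ := hq'
  refine ⟨?_, ?_, ?_⟩
  · simpa [List.head?_append, hx, g1] using h1
  · simpa [List.getLast?_append, hy, g2] using h2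
  · replace h3 := List.isChain_append.1 h3
    obtain ⟨k1, k2, k3⟩ := h3
    obtain ⟨k4, k5, k6⟩ := List.isChain_append.1 k2
    refine List.isChain_append.2 ⟨k1, List.isChain_append.2 ⟨g3, k5, ?_⟩, ?_⟩
    · rw [g2, ← hy]; exact k6
    · have e : (q' ++ b).head? = (q ++ b).head? := by simp [List.head?_append, hx, g1]
      rw [e]; exact k3

theorem aux_gdist_le_s11 {V : Type*} {W : V → V → ℕ∞} {u v : V} {p : List V}
    (h : IsWalk W u v p) : gdist W u v ≤ walkLen W p := sInf_le ⟨p, h, rfl⟩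

theorem aux_exists {V : Type*} {W : V → V → ℕ∞} {u v : V} (h : gdist W u v ≠ ⊤) :
    ∃ p, IsShortestPath W u v p := by
  have hne : {d | ∃ p, IsWalk W u v p ∧ walkLen W p = d}.Nonempty := by
    by_contra hn
    rw [Set.not_nonempty_iff_eq_empty] at hn
    exact h (by rw [gdist, hn, sInf_empty])
  obtain ⟨p, hp, e⟩ := csInf_mem hne
  exact ⟨p, hp, e⟩

theorem aux_shortest_of_le {V : Type*} {W : V → V → ℕ∞} {u v : V} {p : List V}
    (h : IsWalk W u v p) (hle : ∀ q, IsWalk W u v q → walkLen W p ≤ walkLen W q) :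
    IsShortestPath W u v p := by
  refine ⟨h, le_antisymm ?_ (aux_gdist_le_s11 h)⟩
  refine le_sInf ?_
  rintro d ⟨q, hq, rfl⟩
  exact hle q hq

theorem aux_lex_append {V : Type*} {r : V → V → Prop} (b : List V) {s t : List V}
    (h : List.Lex r s t) (hl : s.length = t.length) : List.Lex r (s ++ b) (t ++ b) := by
  induction h with
  | nil => simp at hl
  | cons _ ih => exact List.Lex.cons (ih (by simpa using hl))
  | rel h => exact List.Lex.rel h

theorem aux_shortlex_append {V : Type*} {r : V → V → Prop} (b : List V) {s t : List V}
    (h : List.Shortlex r s t) : List.Shortlex r (s ++ b) (t ++ b) := by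
  rw [List.shortlex_def] at h ⊢
  rcases h with h | ⟨h1, h2⟩
  · left; simpa using h
  · right; exact ⟨by simpa using h1, aux_lex_append b h2 h1⟩

/-- The shortlex-least shortest path. -/
def AuxMin {V : Type*} (W : V → V → ℕ∞) (u v : V) (p : List V) : Prop :=
  IsShortestPath W u v p ∧ ∀ p', IsShortestPath W u v p' → ¬ List.Shortlex WellOrderingRel p' p

theorem AuxMin.unique {V : Type*} {W : V → V → ℕ∞} {u v : V} {p q : List V}
    (hp : AuxMin W u v p) (hq : AuxMin W u v q) : p = q :=
  (List.Shortlex.trichotomous (r := WellOrderingRel)).trichotomous p q (hq.2 p hp.1) (hp.2 q hq.1)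

theorem AuxMin.exists {V : Type*} {W : V → V → ℕ∞} {u v : V} (h : gdist W u v ≠ ⊤) :
    ∃ p, AuxMin W u v p := by
  have wf : WellFounded (List.Shortlex (WellOrderingRel (α := V))) :=
    List.Shortlex.wf WellOrderingRel.isWellOrder.wf
  obtain ⟨p, hp, hm⟩ := wf.has_min {p | IsShortestPath W u v p} (aux_exists h)
  exact ⟨p, hp, hm⟩

theorem AuxMin.sub {V : Type*} {W : V → V → ℕ∞} {u v x y : V} {a q b : List V}
    (h : gdist W u v ≠ ⊤) (hp : AuxMin W u v (a ++ (q ++ b)))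
    (hx : q.head? = some x) (hy : q.getLast? = some y) : AuxMin W x y q := by
  obtain ⟨c, hc⟩ := aux_replace_len W a b x y
  have hqw : IsWalk W x y q := by
    refine ⟨hx, hy, ?_⟩
    exact (List.isChain_append.1 (List.isChain_append.1 hp.1.1.2.2).2.1).1
  have hct : c ≠ ⊤ := by
    rintro rfl
    apply h
    rw [← hp.1.2, hc q hx hy, top_add]
  have hq : IsShortestPath W x y q := by
    refine aux_shortest_of_le hqw fun q' hq' => ?_
    have := aux_gdist_le_s11 (aux_replace_walk hx hy hp.1.1 hq')
    rw [← hp.1.2, hc q hx hy, hc q' hq'.1 hq'.2.1] at this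
    exact (ENat.add_le_add_iff_left hct).1 this
  refine ⟨hq, fun q' hq' hlt => ?_⟩
  refine hp.2 (a ++ (q' ++ b)) ⟨aux_replace_walk hx hy hp.1.1 hq'.1, ?_⟩
    (List.Shortlex.append_left (aux_shortlex_append b hlt) a)
  rw [← hp.1.2, hc q hx hy, hc q' hq'.1.1 hq'.1.2.1, hq'.2, hq.2]

theorem AuxMin.mono {V : Type*} {W W' : V → V → ℕ∞} {u v : V} {p : List V}
    (hW : ∀ x y, W' x y = W x y ∨ W' x y = ⊤) (hp : AuxMin W u v p)
    (he : ∀ q ∈ p.zip p.tail, W' q.1 q.2 = W q.1 q.2) : AuxMin W' u v p := by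
  have key : ∀ q, IsWalk W' u v q → IsWalk W u v q ∧ walkLen W' q = walkLen W q := by
    intro q hq
    have hc := (aux_chain_iff _ q).1 hq.2.2
    have := aux_walk_congr (u := u) (v := v) (p := q) (W := W) (W' := W')
      fun e he => (hW e.1 e.2).resolve_right (hc e he)
    exact ⟨this.1.1 hq, this.2⟩
  obtain ⟨k1, k2⟩ := aux_walk_congr (u := u) (v := v) he
  have hs : IsShortestPath W' u v p := by
    refine aux_shortest_of_le (k1.2 hp.1.1) fun q hq => ?_
    rw [k2, (key q hq).2, hp.1.2]
    exact aux_gdist_le_s11 (key q hq).1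
  refine ⟨hs, fun q hq => hp.2 q ⟨(key q hq.1).1, ?_⟩⟩
  rw [← (key q hq.1).2, hq.2, ← hs.2, k2, hp.1.2]

theorem exists_consistent_shortest_paths_all_graphs {V : Type*} [Fintype V] :
    ∃ ρ : (V → V → ℕ∞) → V → V → List V,
      ∀ W : V → V → ℕ∞, (∀ x y, W x y ≠ 0) →
        (∀ u v, gdist W u v ≠ ⊤ → IsShortestPath W u v (ρ W u v)) ∧
        (∀ u v, gdist W u v ≠ ⊤ →
          ∀ i j : ℕ, ∀ (hij : i ≤ j) (hj : j < (ρ W u v).length),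
            ((ρ W u v).drop i).take (j + 1 - i) =
              ρ W ((ρ W u v).get ⟨i, lt_of_le_of_lt hij hj⟩) ((ρ W u v).get ⟨j, hj⟩)) ∧
        ∀ W' : V → V → ℕ∞, (∀ x y, W' x y = W x y ∨ W' x y = ⊤) →
          ∀ u v, gdist W u v ≠ ⊤ →
            (∀ q ∈ (ρ W u v).zip (ρ W u v).tail, W' q.1 q.2 = W q.1 q.2) →
            ρ W' u v = ρ W u v := by
  classical
  let ρ : (V → V → ℕ∞) → V → V → List V :=
    fun W u v => if h : ∃ p, AuxMin W u v p then h.choose else []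
  have hρ : ∀ W u v p, AuxMin W u v p → ρ W u v = p := by
    intro W u v p hp
    have h : ∃ p, AuxMin W u v p := ⟨p, hp⟩
    have e : ρ W u v = h.choose := dif_pos h
    rw [e]
    exact h.choose_spec.unique hp
  have hmin : ∀ W u v, gdist W u v ≠ ⊤ → AuxMin W u v (ρ W u v) := by
    intro W u v h
    obtain ⟨p, hp⟩ := AuxMin.exists h
    rw [hρ W u v p hp]
    exact hp
  refine ⟨ρ, fun W _ => ⟨fun u v h => (hmin W u v h).1, ?_, ?_⟩⟩
  · intro u v h i j hij hj
    have hm := hmin W u v h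
    generalize ρ W u v = p at hj hm ⊢
    symm
    apply hρ
    have e : p = p.take i ++ ((p.drop i).take (j + 1 - i) ++ (p.drop i).drop (j + 1 - i)) := by
      rw [List.take_append_drop, List.take_append_drop]
    rw [e] at hm
    refine AuxMin.sub h hm ?_ ?_
    · rw [List.head?_eq_getElem?, List.getElem?_take, if_pos (by omega), List.getElem?_drop]
      simp
    · have hl : ((p.drop i).take (j + 1 - i)).length = j + 1 - i := by
        rw [List.length_take, List.length_drop]; omega
      rw [List.getLast?_eq_getElem?, hl, List.getElem?_take, if_pos (by omega),
        List.getElem?_drop, show i + (j + 1 - i - 1) = j by omega]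
      simp
  · intro W' hW u v h he
    exact hρ _ _ _ _ ((hmin W u v h).mono hW he)
end

section
/- Let SA_Z(G) denote the matrix obtained from the symbolic adjacency matrix SA(G) by substituting an arbitrary field element Z_{i,j} ∈ 𝔽 for each variable z_{i,j}, so that SA_Z(G) is an n×n matrix over 𝔽[x]. Then for every choice of the values Z_{i,j} and all vertices u, v, deg*_x( adj(SA_Z(G))_{u,v} ) ≥ ‖uv‖; in particular, if ‖uv‖ = +∞ then adj(SA_Z(G))_{u,v} = 0, and if ‖uv‖ ≥ r then adj(SA_Z(G))_{u,v} ≡ 0 (mod x^r). -/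
/-- The symbolic adjacency matrix of the digraph on `Fin n` with weight function `W`
(`W i j = ⊤` meaning no edge), with the variable `z_{i,j}` substituted by the field
element `Z (i, j)`; a matrix over `𝔽[x]`. -/
noncomputable def symbAdjZ {F : Type*} [Field F] {n : ℕ} (W : Fin n → Fin n → ℕ∞)
    (Z : Fin n × Fin n → F) : Matrix (Fin n) (Fin n) (Polynomial F) :=
  fun i j =>
    if i = j then 1
    else if W i j ≠ ⊤ then
      Polynomial.C (Z (i, j)) * Polynomial.X ^ (W i j).toNat
    else 0

theorem gdist_self_aux {V : Type*} (W : V → V → ℕ∞) (u : V) : gdist W u u = 0 := by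
  apply le_antisymm _ zero_le
  apply sInf_le
  exact ⟨[u], ⟨by simp, by simp, by simp [List.Chain']⟩, by simp [walkLen]⟩

theorem gdist_step_aux {V : Type*} (W : V → V → ℕ∞) (u j v : V) (h : W u j ≠ ⊤) :
    gdist W u v ≤ W u j + gdist W j v := by
  by_cases hne : {d | ∃ p, IsWalk W j v p ∧ walkLen W p = d}.Nonempty
  · obtain ⟨p, ⟨h1, h2, h3⟩, h4⟩ := csInf_mem hne
    change walkLen W p = gdist W j v at h4
    rw [← h4]
    apply sInf_le
    cases p with
    | nil => simp at h1
    | cons a t =>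
      simp only [List.head?_cons, Option.some.injEq] at h1
      subst h1
      refine ⟨u :: a :: t, ⟨by simp, ?_, ?_⟩, ?_⟩
      · rw [List.getLast?_cons_cons]; exact h2
      · exact List.isChain_cons_cons.2 ⟨h, h3⟩
      · simp [walkLen]
  · rw [Set.not_nonempty_iff_eq_empty] at hne
    have : gdist W j v = ⊤ := by unfold gdist; rw [hne]; simp
    rw [this]; simp

theorem dvd_aux {F : Type*} [Field F] {n : ℕ}
    (W : Fin n → Fin n → ℕ∞) (hpos : ∀ i j, W i j ≠ 0)
    (Z : Fin n × Fin n → F) (v : Fin n) (r : ℕ) : ∀ u, (r : ℕ∞) ≤ gdist W u v →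
        Polynomial.X ^ r ∣ (symbAdjZ W Z).adjugate u v := by
  induction r using Nat.strong_induction_on with
  | _ r ih =>
  intro u hr
  by_cases huv : u = v
  · subst huv
    rw [gdist_self_aux] at hr
    have : r = 0 := by simpa using hr
    simp [this]
  have key := congrFun (congrFun (Matrix.mul_adjugate (symbAdjZ W Z)) u) v
  rw [Matrix.mul_apply, Matrix.smul_apply, Matrix.one_apply_ne huv, smul_zero,
    ← Finset.add_sum_erase _ _ (Finset.mem_univ u)] at key
  have hd : symbAdjZ W Z u u = 1 := by simp [symbAdjZ]
  rw [hd, one_mul] at key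
  rw [eq_neg_of_add_eq_zero_left key, dvd_neg]
  apply Finset.dvd_sum
  intro j hj
  have hju : u ≠ j := (Finset.ne_of_mem_erase hj).symm
  by_cases hw : W u j = ⊤
  · simp [symbAdjZ, hju, hw]
  have hs := hr.trans (gdist_step_aux W u j v hw)
  have hp := hpos u j
  simp only [symbAdjZ, hju, if_false, hw, ne_eq, not_false_eq_true, if_true]
  obtain ⟨w, hw'⟩ := ENat.ne_top_iff_exists.1 hw
  rw [← hw'] at hs hp ⊢
  have hw0 : w ≠ 0 := by simpa using hp
  rw [ENat.toNat_coe, mul_assoc]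
  apply Dvd.dvd.mul_left
  by_cases hrw : r ≤ w
  · exact (pow_dvd_pow _ hrw).mul_right _
  · have e : r = w + (r - w) := by omega
    rw [e, pow_add]
    apply mul_dvd_mul_left
    apply ih _ (by omega)
    rw [e, Nat.cast_add] at hs
    exact (ENat.add_le_add_iff_left (ENat.coe_ne_top w)).1 hs

theorem dist_le_trailingDegree_adjugate_symbAdjZ {F : Type*} [Field F] {n : ℕ}
    (W : Fin n → Fin n → ℕ∞) (hpos : ∀ i j, W i j ≠ 0) (hloop : ∀ i, W i i = ⊤)
    (Z : Fin n × Fin n → F) (u v : Fin n) :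
    gdist W u v ≤ ((symbAdjZ W Z).adjugate u v).trailingDegree ∧
      (gdist W u v = ⊤ → (symbAdjZ W Z).adjugate u v = 0) ∧
      ∀ r : ℕ, (r : ℕ∞) ≤ gdist W u v →
        Polynomial.X ^ r ∣ (symbAdjZ W Z).adjugate u v := by
  have hdvd := fun r => dvd_aux W hpos Z v r u
  have htop : gdist W u v = ⊤ → (symbAdjZ W Z).adjugate u v = 0 := by
    intro ht
    by_contra h0
    have := hdvd (((symbAdjZ W Z).adjugate u v).natDegree + 1) (by rw [ht]; exact le_top)
    have := Polynomial.natDegree_le_of_dvd this h0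
    simp at this
  refine ⟨?_, htop, hdvd⟩
  by_cases ht : gdist W u v = ⊤
  · rw [htop ht]; simp
  · obtain ⟨d, hd⟩ := ENat.ne_top_iff_exists.1 ht
    have h := Polynomial.X_pow_dvd_iff.1 (hdvd d hd.le)
    rw [← hd]
    refine Finset.le_min (fun a ha => ?_)
    have hda : d ≤ a := by
      by_contra hlt
      exact Polynomial.mem_support_iff.1 ha (h a (by omega))
    exact Nat.cast_le.2 hda
end
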